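/- For every finite tree T, the subtree density D(T) lies in the interval [1/3,1]; moreover, the set of values {D(T) : T a finite tree} is dense in [1/3,1]. -/

import Mathlib

/-- A subtree of a graph: a nonempty set of vertices inducing a connected subgraph. -/
def IsSubtree {V : Type*} (G : SimpleGraph V) (S : Finset V) : Prop :=
  S.Nonempty ∧ (G.induce (S : Set V)).Connected

/-- `N(T)`: the number of subtrees. -/
noncomputable def numSubtrees {V : Type*} [Fintype V] (G : SimpleGraph V) : ℕ :=
  Nat.card {S : Finset V // IsSubtree G S}

/-- `R(T) = Σ_S |S|`: the total number of vertices over all subtrees. -/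
noncomputable def totalSubtreeOrder {V : Type*} [Fintype V] (G : SimpleGraph V) : ℕ :=
  ∑ S ∈ (Set.toFinite {S : Finset V | IsSubtree G S}).toFinset, S.card

/-- `μ(T)`: the average subtree order. -/
noncomputable def avgSubtreeOrder {V : Type*} [Fintype V] (G : SimpleGraph V) : ℝ :=
  (totalSubtreeOrder G : ℝ) / (numSubtrees G : ℝ)

/-- `D(T) = μ(T)/|T|`: the subtree density. -/
noncomputable def subtreeDensity {V : Type*} [Fintype V] (G : SimpleGraph V) : ℝ :=
  avgSubtreeOrder G / (Fintype.card V : ℝ)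

/-!
Joining two trees by an edge `vw` adds their subtree generating functions and adds, as a further
term, the product of the generating functions of the subtrees through `v` and through `w`. So the
numbers of vertices, of subtrees and of subtrees through the root, and the total orders of the
latter two families, are computed recursively by building a rooted tree from its branches.

For the lower bound, root the tree at a vertex lying in the largest number of subtrees. The
subtrees through the root have average order at least `(|T| + 1) / 2`, and the other subtrees lie in
the branches, where the bound holds by induction. The loss in replacing `|T|` by the order of a
branch is made up by the excess over `|T| / 3`, because by the choice of the root no branch has
more rooted subtrees than the rest of the tree.

For density, join the centres of two stars with `k` leaves by a path with about `τ * 2 ^ k`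
vertices. As `k` tends to infinity the subtree density tends to
`(1 + τ + τ ^ 2 / 6) / (1 + 2 * τ + τ ^ 2 / 2)`, which takes every value in `(1 / 3, 1)`.
-/

open Finset

section Glue

variable {V W V' W' : Type*} {G : SimpleGraph V} {H : SimpleGraph W}
  {G' : SimpleGraph V'} {H' : SimpleGraph W'} {v : V} {w : W}

theorem isSubtree_iff_forall_adj {S : Finset V} :
    IsSubtree G S ↔ S.Nonempty ∧ ∀ p : V → Prop,
      (∀ x ∈ S, ∀ y ∈ S, G.Adj x y → p x → p y) → ∀ x ∈ S, p x → ∀ y ∈ S, p y := by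
  refine and_congr_right fun ⟨z, hz⟩ => ⟨fun h p hp x hx hpx y hy => ?_, fun h => ?_⟩
  · obtain ⟨walk⟩ := h.preconnected ⟨x, hx⟩ ⟨y, hy⟩
    by_contra hpy
    obtain ⟨d, -, hfst, hsnd⟩ := walk.exists_boundary_dart {z | p z} hpx hpy
    exact hsnd (hp _ d.fst.2 _ d.snd.2 d.adj hfst)
  · refine (SimpleGraph.connected_iff_exists_forall_reachable _).2 ⟨⟨z, hz⟩, fun y => ?_⟩
    obtain ⟨_, hreach⟩ := h
      (fun a => ∃ ha : a ∈ S, (G.induce (S : Set V)).Reachable ⟨z, hz⟩ ⟨a, ha⟩)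
      (fun a _ b hb hab ⟨_, hreach⟩ => ⟨hb, hreach.trans <| SimpleGraph.Adj.reachable hab⟩)
      z hz ⟨hz, .refl _⟩ y y.2
    exact hreach

theorem isSubtree_map_iff (f : G ↪g H) {S : Finset V} :
    IsSubtree H (S.map f.toEmbedding) ↔ IsSubtree G S := by
  have hforall (p : W → Prop) : (∀ y ∈ S.map f.toEmbedding, p y) ↔ ∀ x ∈ S, p (f x) :=
    Finset.forall_mem_map
  simp only [isSubtree_iff_forall_adj, map_nonempty, hforall, f.map_adj_iff]
  refine and_congr_right fun _ => ⟨fun h p => ?_, fun h p => h fun x => p (f x)⟩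
  simpa [f.injective.extend_apply] using h (Function.extend f p fun _ => False)

theorem isSubtree_univ_iff [Fintype V] : IsSubtree G univ ↔ G.Connected := by
  rw [IsSubtree, coe_univ, G.induceUnivIso.connected_iff, univ_nonempty_iff]
  exact and_iff_right_of_imp fun h => h.nonempty

theorem isSubtree_iff_nonempty_of_subsingleton [Subsingleton V] {S : Finset V} :
    IsSubtree G S ↔ S.Nonempty :=
  and_iff_left_of_imp fun hS =>
    have : Nonempty (S : Set V) := hS.to_subtype
    .of_subsingleton

/-- The graph obtained from the disjoint union of `G` and `H` by joining `v` and `w` by an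
edge. -/
def glue (G : SimpleGraph V) (H : SimpleGraph W) (v : V) (w : W) : SimpleGraph (V ⊕ W) :=
  (G ⊕g H) ⊔ SimpleGraph.edge (.inl v) (.inr w)

@[simp]
theorem glue_adj_inl_inl {a b : V} : (glue G H v w).Adj (.inl a) (.inl b) ↔ G.Adj a b := by
  simp [glue, SimpleGraph.edge_adj]

@[simp]
theorem glue_adj_inr_inr {a b : W} : (glue G H v w).Adj (.inr a) (.inr b) ↔ H.Adj a b := by
  simp [glue, SimpleGraph.edge_adj]

@[simp]
theorem glue_adj_inl_inr {a : V} {b : W} :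
    (glue G H v w).Adj (.inl a) (.inr b) ↔ a = v ∧ b = w := by
  simp [glue, SimpleGraph.edge_adj]

@[simp]
theorem glue_adj_inr_inl {a : V} {b : W} :
    (glue G H v w).Adj (.inr b) (.inl a) ↔ a = v ∧ b = w := by
  rw [SimpleGraph.adj_comm, glue_adj_inl_inr]

/-- The inclusion of the first graph into the glued graph. -/
def glueInl (G : SimpleGraph V) (H : SimpleGraph W) (v : V) (w : W) : G ↪g glue G H v w :=
  ⟨.inl, glue_adj_inl_inl⟩

/-- The inclusion of the second graph into the glued graph. -/
def glueInr (G : SimpleGraph V) (H : SimpleGraph W) (v : V) (w : W) : H ↪g glue G H v w :=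
  ⟨.inr, glue_adj_inr_inr⟩

/-- Gluing isomorphic graphs at corresponding vertices yields isomorphic graphs. -/
def glueCongr {v' : V'} {w' : W'} (e : G ≃g G') (f : H ≃g H') (hv : e v = v') (hw : f w = w') :
    glue G H v w ≃g glue G' H' v' w' where
  toEquiv := e.toEquiv.sumCongr f.toEquiv
  map_rel_iff' := by
    subst hv hw
    rintro (a | a) (b | b) <;> simp [e.map_adj_iff, f.map_adj_iff]

/-- A graph with a single edge between the vertex set `s` and its complement is glued from the
two induced subgraphs. -/
noncomputable def isoGlueInduce (s : Set V) {u : V} (hv : v ∈ s) (hu : u ∈ sᶜ)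
    (hcross : ∀ a ∈ s, ∀ b ∈ sᶜ, G.Adj a b ↔ a = v ∧ b = u) :
    G ≃g glue (G.induce s) (G.induce sᶜ) ⟨v, hv⟩ ⟨u, hu⟩ :=
  open Classical in SimpleGraph.Iso.symm
    { toEquiv := Equiv.Set.sumCompl s
      map_rel_iff' := by
        rintro (⟨a, ha⟩ | ⟨a, ha⟩) (⟨b, hb⟩ | ⟨b, hb⟩)
        · simp
        · simpa using hcross a ha b hb
        · simpa [G.adj_comm a b] using hcross b hb a ha
        · simp }

theorem isoGlueInduce_apply (s : Set V) {u : V} (hv : v ∈ s) (hu : u ∈ sᶜ)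
    (hcross : ∀ a ∈ s, ∀ b ∈ sᶜ, G.Adj a b ↔ a = v ∧ b = u) :
    isoGlueInduce s hv hu hcross v = .inl ⟨v, hv⟩ := by
  classical exact Equiv.Set.sumCompl_symm_apply_of_mem hv

namespace IsSubtree

variable {A : Finset V} {B : Finset W}

-- A property of the vertices of `A` extends to the whole subtree with the constant value
-- `p v` on `B`.
theorem left_of_glue (h : IsSubtree (glue G H v w) (A.disjSum B)) (hA : A.Nonempty) :
    IsSubtree G A := by
  refine isSubtree_iff_forall_adj.2 ⟨hA, fun p hp x hx hpx y hy => ?_⟩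
  refine (isSubtree_iff_forall_adj.1 h).2 (Sum.elim p fun _ => p v) ?_ (.inl x)
    (inl_mem_disjSum.2 hx) hpx (.inl y) (inl_mem_disjSum.2 hy)
  simp only [Sum.forall, inl_mem_disjSum, inr_mem_disjSum, glue_adj_inl_inl, glue_adj_inl_inr,
    glue_adj_inr_inl, Sum.elim_inl, Sum.elim_inr]
  grind

theorem right_of_glue (h : IsSubtree (glue G H v w) (A.disjSum B)) (hB : B.Nonempty) :
    IsSubtree H B := by
  refine isSubtree_iff_forall_adj.2 ⟨hB, fun p hp x hx hpx y hy => ?_⟩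
  refine (isSubtree_iff_forall_adj.1 h).2 (Sum.elim (fun _ => p w) p) ?_ (.inr x)
    (inr_mem_disjSum.2 hx) hpx (.inr y) (inr_mem_disjSum.2 hy)
  simp only [Sum.forall, inl_mem_disjSum, inr_mem_disjSum, glue_adj_inr_inr, glue_adj_inl_inr,
    glue_adj_inr_inl, Sum.elim_inl, Sum.elim_inr]
  grind

theorem mem_and_mem_of_glue (h : IsSubtree (glue G H v w) (A.disjSum B)) (hA : A.Nonempty)
    (hB : B.Nonempty) : v ∈ A ∧ w ∈ B := by
  by_contra hvw
  obtain ⟨a, ha⟩ := hA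
  obtain ⟨b, hb⟩ := hB
  refine (isSubtree_iff_forall_adj.1 h).2 (Sum.isLeft ·) ?_ (.inl a)
    (inl_mem_disjSum.2 ha) rfl (.inr b) (inr_mem_disjSum.2 hb) |> Bool.false_ne_true
  simp only [Sum.forall, inl_mem_disjSum, inr_mem_disjSum, glue_adj_inl_inr, Sum.isLeft_inl,
    Sum.isLeft_inr]
  grind

theorem disjSum (hA : IsSubtree G A) (hv : v ∈ A) (hB : IsSubtree H B) (hw : w ∈ B) :
    IsSubtree (glue G H v w) (A.disjSum B) := by
  have hA' := ((isSubtree_map_iff (glueInl G H v w)).2 hA).2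
  have hB' := ((isSubtree_map_iff (glueInr G H v w)).2 hB).2
  have hunion : ((A.disjSum B : Finset (V ⊕ W)) : Set (V ⊕ W)) =
      ↑(A.map (glueInl G H v w).toEmbedding) ∪ ↑(B.map (glueInr G H v w).toEmbedding) := by
    ext (x | x) <;> simp [glueInl, glueInr]
  refine ⟨⟨.inl v, inl_mem_disjSum.2 hv⟩, ?_⟩
  rw [hunion]
  exact SimpleGraph.connected_induce_union hA'.preconnected hB'.preconnected
    (mem_map_of_mem _ hv) (mem_map_of_mem _ hw) (glue_adj_inl_inr.2 ⟨rfl, rfl⟩)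

end IsSubtree

theorem isSubtree_glue_iff {A : Finset V} {B : Finset W} :
    IsSubtree (glue G H v w) (A.disjSum B) ↔
      (IsSubtree G A ∧ B = ∅) ∨ (A = ∅ ∧ IsSubtree H B) ∨
        ((IsSubtree G A ∧ v ∈ A) ∧ (IsSubtree H B ∧ w ∈ B)) := by
  constructor
  · intro h
    rcases A.eq_empty_or_nonempty with rfl | hA
    · exact .inr (.inl ⟨rfl, h.right_of_glue (by simpa [nonempty_iff_ne_empty] using h.1)⟩)
    rcases B.eq_empty_or_nonempty with rfl | hB
    · exact .inl ⟨h.left_of_glue hA, rfl⟩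
    · obtain ⟨hv, hw⟩ := h.mem_and_mem_of_glue hA hB
      exact .inr (.inr ⟨⟨h.left_of_glue hA, hv⟩, h.right_of_glue hB, hw⟩)
  · rintro (⟨hA, rfl⟩ | ⟨rfl, hB⟩ | ⟨⟨hA, hv⟩, hB, hw⟩)
    · rw [disjSum_empty]
      exact (isSubtree_map_iff (glueInl G H v w)).2 hA
    · rw [empty_disjSum]
      exact (isSubtree_map_iff (glueInr G H v w)).2 hB
    · exact hA.disjSum hv hB hw

theorem isTree_glue_iff [Finite V] [Finite W] :
    (glue G H v w).IsTree ↔ G.IsTree ∧ H.IsTree := by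
  cases nonempty_fintype V
  cases nonempty_fintype W
  constructor
  · intro h
    have hsub : IsSubtree (glue G H v w) (univ.disjSum univ) := by
      rw [univ_disjSum_univ]
      exact isSubtree_univ_iff.2 h.connected
    exact ⟨⟨isSubtree_univ_iff.1 (hsub.left_of_glue ⟨v, mem_univ v⟩),
        h.isAcyclic.embedding (glueInl G H v w)⟩,
      ⟨isSubtree_univ_iff.1 (hsub.right_of_glue ⟨w, mem_univ w⟩),
        h.isAcyclic.embedding (glueInr G H v w)⟩⟩
  · simp only [SimpleGraph.isTree_iff_connected_and_card]
    rintro ⟨⟨hG, hGcard⟩, hH, hHcard⟩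
    have hedges : Nat.card (glue G H v w).edgeSet =
        Nat.card G.edgeSet + Nat.card H.edgeSet + 1 := by
      rw [glue, SimpleGraph.edgeSet_sup, SimpleGraph.edgeSet_edge_of_ne (by simp),
        Nat.card_coe_set_eq, Set.ncard_union_eq (by simp), Set.ncard_singleton,
        ← Nat.card_coe_set_eq, Nat.card_congr SimpleGraph.edgeSetSumEquiv, Nat.card_sum]
    refine ⟨hG.sum_sup_edge hH, ?_⟩
    rw [hedges, Nat.card_sum]
    lia

theorem exists_forall_adj_iff_of_isBridge {v u : V} (hvu : G.Adj v u)
    (hbridge : G.IsBridge s(v, u)) :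
    ∃ s : Set V, v ∈ s ∧ u ∈ sᶜ ∧ ∀ a ∈ s, ∀ b ∈ sᶜ, G.Adj a b ↔ a = v ∧ b = u := by
  rw [SimpleGraph.isBridge_iff] at hbridge
  refine ⟨{y | (G.deleteEdges {s(v, u)}).Reachable v y}, .refl _, hbridge, fun a ha b hb => ?_⟩
  refine ⟨fun hab => ?_, by rintro ⟨rfl, rfl⟩; exact hvu⟩
  have hedge : s(a, b) = s(v, u) := by
    by_contra hne
    exact hb (ha.trans (SimpleGraph.deleteEdges_adj.2 ⟨hab, hne⟩).reachable)
  rcases Sym2.eq_iff.1 hedge with h | ⟨rfl, rfl⟩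
  · exact h
  · exact absurd ha hbridge

end Glue

section DisjSum

variable {V W : Type*}

theorem forall_finset_sum {p : Finset (V ⊕ W) → Prop} :
    (∀ S, p S) ↔ ∀ (A : Finset V) (B : Finset W), p (A.disjSum B) :=
  ⟨fun h _ _ => h _, fun h S => toLeft_disjSum_toRight (u := S) ▸ h S.toLeft S.toRight⟩

theorem injective2_disjSum : Function.Injective2 (disjSum : Finset V → Finset W → _) :=
  fun _ _ _ _ h => disjSum_inj.1 h

theorem disjSum_mem_image2_disjSum {𝒜 : Set (Finset V)} {ℬ : Set (Finset W)} {A : Finset V}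
    {B : Finset W} : A.disjSum B ∈ Set.image2 disjSum 𝒜 ℬ ↔ A ∈ 𝒜 ∧ B ∈ ℬ :=
  Set.mem_image2_iff injective2_disjSum

end DisjSum

section GeneratingFunctions

open Polynomial

variable {V W : Type*} [Fintype V] [Fintype W]

/-- The generating function `∑ S ∈ 𝒮, X ^ |S|` of a family `𝒮` of finite sets by order. -/
noncomputable def orderPoly (𝒮 : Set (Finset V)) : ℕ[X] :=
  ∑ S ∈ 𝒮.toFinite.toFinset, X ^ #S

theorem eval_orderPoly (𝒮 : Set (Finset V)) : (orderPoly 𝒮).eval 1 = Nat.card 𝒮 := by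
  simp [orderPoly, eval_finsetSum, ← Set.ncard_eq_toFinset_card, Nat.card_coe_set_eq]

theorem eval_derivative_orderPoly (𝒮 : Set (Finset V)) :
    (derivative (orderPoly 𝒮)).eval 1 = ∑ S ∈ 𝒮.toFinite.toFinset, #S := by
  simp [orderPoly, eval_finsetSum, derivative_X_pow]

theorem orderPoly_singleton (S : Finset V) : orderPoly {S} = X ^ #S := by
  simp [orderPoly]

theorem orderPoly_union {𝒮 𝒯 : Set (Finset V)} (h : Disjoint 𝒮 𝒯) :
    orderPoly (𝒮 ∪ 𝒯) = orderPoly 𝒮 + orderPoly 𝒯 := by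
  classical
  rw [orderPoly, Set.Finite.toFinset_union 𝒮.toFinite 𝒯.toFinite,
    sum_union (Set.Finite.disjoint_toFinset.2 h), orderPoly, orderPoly]

theorem orderPoly_image_equiv (e : V ≃ W) (𝒮 : Set (Finset V)) :
    orderPoly (e.finsetCongr '' 𝒮) = orderPoly 𝒮 := by
  refine (Finset.sum_equiv e.finsetCongr (fun S => ?_) fun S _ => ?_).symm
  · rw [Set.Finite.mem_toFinset, Set.Finite.mem_toFinset, e.finsetCongr.injective.mem_set_image]
  · simp

theorem orderPoly_image2_disjSum (𝒜 : Set (Finset V)) (ℬ : Set (Finset W)) :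
    orderPoly (Set.image2 disjSum 𝒜 ℬ) = orderPoly 𝒜 * orderPoly ℬ := by
  rw [orderPoly, orderPoly, orderPoly, sum_mul_sum, ← sum_product']
  refine (sum_nbij (fun p => p.1.disjSum p.2) ?_ ?_ ?_ fun p _ => ?_).symm
  · simp +contextual
  · exact injective2_disjSum.uncurry.injOn
  · rintro S hS
    simpa using hS
  · simp [pow_add]

/-- The generating function of the subtrees of `G` by order. -/
noncomputable def subtreePoly (G : SimpleGraph V) : ℕ[X] :=
  orderPoly {S | IsSubtree G S}

/-- The generating function of the subtrees of `G` containing `v` by order. -/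
noncomputable def rootedSubtreePoly (G : SimpleGraph V) (v : V) : ℕ[X] :=
  orderPoly {S | IsSubtree G S ∧ v ∈ S}

theorem numSubtrees_eq_eval (G : SimpleGraph V) : numSubtrees G = (subtreePoly G).eval 1 :=
  (eval_orderPoly _).symm

theorem totalSubtreeOrder_eq_eval (G : SimpleGraph V) :
    totalSubtreeOrder G = (derivative (subtreePoly G)).eval 1 :=
  (eval_derivative_orderPoly _).symm

theorem subtreePoly_congr {G : SimpleGraph V} {H : SimpleGraph W} (e : G ≃g H) :
    subtreePoly G = subtreePoly H := by
  have himage : {S | IsSubtree H S} = e.toEquiv.finsetCongr '' {S | IsSubtree G S} := by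
    rw [Equiv.image_eq_preimage_symm]
    ext S
    exact (isSubtree_map_iff e.symm.toEmbedding).symm
  rw [subtreePoly, subtreePoly, himage, orderPoly_image_equiv]

theorem subtreeDensity_congr {G : SimpleGraph V} {H : SimpleGraph W} (e : G ≃g H) :
    subtreeDensity G = subtreeDensity H := by
  simp only [subtreeDensity, avgSubtreeOrder, numSubtrees_eq_eval, totalSubtreeOrder_eq_eval,
    subtreePoly_congr e, Fintype.card_congr e.toEquiv]

theorem rootedSubtreePoly_of_unique [Unique V] (G : SimpleGraph V) (v : V) :
    rootedSubtreePoly G v = X := by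
  have hsubtrees : {S | IsSubtree G S ∧ v ∈ S} = {{default}} := by
    ext S
    simp only [isSubtree_iff_nonempty_of_subsingleton, Set.mem_ofPred_eq, Set.mem_singleton_iff,
      ← nonempty_iff_eq_singleton_default, and_iff_left_iff_imp, Unique.eq_default v]
    exact fun ⟨x, hx⟩ => Unique.eq_default x ▸ hx
  simp [rootedSubtreePoly, hsubtrees, orderPoly_singleton]

theorem subtreePoly_of_unique [Unique V] (G : SimpleGraph V) : subtreePoly G = X := by
  have hsubtrees : {S | IsSubtree G S} = {{default}} := by
    ext S
    simp [isSubtree_iff_nonempty_of_subsingleton, nonempty_iff_eq_singleton_default]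
  simp [subtreePoly, hsubtrees, orderPoly_singleton]

theorem subtreePoly_glue (G : SimpleGraph V) (H : SimpleGraph W) (v : V) (w : W) :
    subtreePoly (glue G H v w) =
      subtreePoly G + subtreePoly H + rootedSubtreePoly G v * rootedSubtreePoly H w := by
  have hsubtrees : {S | IsSubtree (glue G H v w) S} =
      Set.image2 disjSum {A | IsSubtree G A} {∅} ∪ Set.image2 disjSum {∅} {B | IsSubtree H B} ∪
        Set.image2 disjSum {A | IsSubtree G A ∧ v ∈ A} {B | IsSubtree H B ∧ w ∈ B} := by
    simp only [Set.ext_iff, forall_finset_sum, Set.mem_union, disjSum_mem_image2_disjSum,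
      Set.mem_ofPred_eq, Set.mem_singleton_iff, isSubtree_glue_iff, or_assoc, implies_true]
  rw [subtreePoly, hsubtrees, orderPoly_union, orderPoly_union]
  · simp only [orderPoly_image2_disjSum, orderPoly_singleton, card_empty, pow_zero, mul_one,
      one_mul, subtreePoly, rootedSubtreePoly]
  all_goals
    simp only [Set.disjoint_left, forall_finset_sum, Set.mem_union, disjSum_mem_image2_disjSum,
      Set.mem_ofPred_eq, Set.mem_singleton_iff]
    grind [IsSubtree]

theorem rootedSubtreePoly_glue (G : SimpleGraph V) (H : SimpleGraph W) (v : V) (w : W) :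
    rootedSubtreePoly (glue G H v w) (.inl v) =
      rootedSubtreePoly G v * (1 + rootedSubtreePoly H w) := by
  have hsubtrees : {S | IsSubtree (glue G H v w) S ∧ .inl v ∈ S} =
      Set.image2 disjSum {A | IsSubtree G A ∧ v ∈ A} ({∅} ∪ {B | IsSubtree H B ∧ w ∈ B}) := by
    simp only [Set.ext_iff, forall_finset_sum, Set.mem_union, disjSum_mem_image2_disjSum,
      Set.mem_ofPred_eq, Set.mem_singleton_iff, isSubtree_glue_iff, inl_mem_disjSum]
    grind
  have hdisjoint : Disjoint {∅} {B | IsSubtree H B ∧ w ∈ B} := by simp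
  rw [rootedSubtreePoly, hsubtrees, orderPoly_image2_disjSum, orderPoly_union hdisjoint,
    orderPoly_singleton, card_empty, pow_zero, rootedSubtreePoly, rootedSubtreePoly]

theorem totalSubtreeOrder_le (G : SimpleGraph V) :
    totalSubtreeOrder G ≤ Fintype.card V * numSubtrees G := by
  have hcard : numSubtrees G = #{S | IsSubtree G S}.toFinite.toFinset := by
    rw [← Set.ncard_eq_toFinset_card]
    rfl
  rw [hcard, mul_comm]
  exact sum_le_card_nsmul _ _ _ fun S _ => card_le_univ S

theorem subtreeDensity_le_one (G : SimpleGraph V) : subtreeDensity G ≤ 1 := by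
  rw [subtreeDensity, avgSubtreeOrder, div_div, mul_comm]
  exact div_le_one_of_le₀ (by exact_mod_cast totalSubtreeOrder_le G) (by positivity)

end GeneratingFunctions

section Arithmetic

theorem two_mul_mul_add_le {s x a q : ℕ} (hs : 2 ≤ s) (hsq : 2 * s ≤ q + 2) (hx : 1 ≤ x)
    (hxa : x ≤ a) (ha : 2 * a ≤ 2 ^ x) (haq : a ≤ q) :
    2 * s * a + s ≤ s * x + q * (1 + a) := by
  by_cases hq : 2 * s ≤ q
  · have hqa : 2 * s * a ≤ q * a := by gcongr
    have hsx : s ≤ s * x := Nat.le_mul_of_pos_right s hx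
    linarith
  · have hax : 2 * (1 + a) ≤ s * (x + 1) := by
      by_cases hx3 : 3 ≤ x
      · calc 2 * (1 + a) ≤ s * (3 + 1) := by lia
          _ ≤ s * (x + 1) := by gcongr
      · interval_cases x <;> lia
    have hmul : 2 * s * (1 + a) ≤ (q + 2) * (1 + a) := by gcongr
    linarith

theorem two_branch_inequality {X Y A B : ℝ} (hX : 1 ≤ X) (hY : 1 ≤ Y) (hXA : X ≤ A) (hYB : Y ≤ B)
    (hAB : A ≤ B + 1) (hBA : B ≤ A + 1) :
    Y * (X - 1) * (2 * A - X) + X * (Y - 1) * (2 * B - Y) ≤ (X + Y + 2) * (A * B) := by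
  have hmain : X * Y * (2 * (A + B) - (X + Y)) ≤ (X + Y) * (A * B + 1 / 4) :=
    calc X * Y * (2 * (A + B) - (X + Y))
        ≤ (X + Y) ^ 2 / 4 * (2 * (A + B) - (X + Y)) := by
          gcongr
          · linarith
          · linarith [sq_nonneg (X - Y)]
      _ = (X + Y) * (((A + B) ^ 2 - (A + B - (X + Y)) ^ 2) / 4) := by ring
      _ ≤ (X + Y) * (A * B + 1 / 4) := by
          gcongr
          nlinarith [sq_nonneg (A + B - (X + Y))]
  have hXY : X * Y ≤ A * Y := by gcongr
  have hXB : 0 ≤ X * B := mul_nonneg (by linarith) (by linarith)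
  have hA : A ≤ A * B := le_mul_of_one_le_right (by linarith) (by linarith)
  calc Y * (X - 1) * (2 * A - X) + X * (Y - 1) * (2 * B - Y)
      = X * Y * (2 * (A + B) - (X + Y)) + 2 * (X * Y) - 2 * (A * Y) - 2 * (X * B) := by ring
    _ ≤ (X + Y) * (A * B + 1 / 4) := by linarith
    _ = (X + Y) * (A * B) + (X + Y) / 4 := by ring
    _ ≤ (X + Y) * (A * B) + 2 * (A * B) := by linarith
    _ = (X + Y + 2) * (A * B) := by ring

theorem exists_pos_quadratic_eq_zero {a b c : ℝ} (ha : 0 < a) (hc : c < 0) :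
    ∃ x, 0 < x ∧ a * x ^ 2 + b * x + c = 0 := by
  obtain ⟨s, hlt, hsq⟩ : ∃ s, b < s ∧ s ^ 2 = b ^ 2 - 4 * a * c := by
    have hdiscrim : b ^ 2 < b ^ 2 - 4 * a * c := by
      linarith [mul_neg_of_pos_of_neg ha hc]
    exact ⟨_, Real.lt_sqrt_of_sq_lt hdiscrim, Real.sq_sqrt ((sq_nonneg b).trans hdiscrim.le)⟩
  refine ⟨(s - b) / (2 * a), div_pos (sub_pos.2 hlt) (by positivity), ?_⟩
  field_simp
  linear_combination hsq

end Arithmetic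

/-- Codes for finite rooted trees: `point` is the one-vertex tree, and `graft s t` joins the roots
of `s` and `t` by an edge and keeps the root of `s`. A rooted tree has several codes, since the
branches at the root may be grafted in any order. -/
inductive GraftTree : Type
  | point : GraftTree
  | graft (s t : GraftTree) : GraftTree

namespace GraftTree

/-- The number of vertices. -/
@[simp]
def order : GraftTree → ℕ
  | point => 1
  | graft s t => s.order + t.order

/-- The number of subtrees containing the root. -/
@[simp]
def rooted : GraftTree → ℕ
  | point => 1
  | graft s t => s.rooted * (1 + t.rooted)

/-- The total order of the subtrees containing the root. -/
@[simp]
def rootedTotal : GraftTree → ℕ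
  | point => 1
  | graft s t => s.rootedTotal * (1 + t.rooted) + s.rooted * t.rootedTotal

/-- The number of subtrees. -/
@[simp]
def count : GraftTree → ℕ
  | point => 1
  | graft s t => s.count + t.count + s.rooted * t.rooted

/-- The total order of the subtrees. -/
@[simp]
def total : GraftTree → ℕ
  | point => 1
  | graft s t => s.total + t.total + (s.rootedTotal * t.rooted + s.rooted * t.rootedTotal)

section Graph

/-- The vertex type of the tree encoded by a `GraftTree`. -/
def Vertex : GraftTree → Type
  | point => Unit
  | graft s t => s.Vertex ⊕ t.Vertex

instance : Unique point.Vertex := inferInstanceAs (Unique Unit)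

instance instFintypeVertex : (b : GraftTree) → Fintype b.Vertex
  | point => inferInstanceAs (Fintype Unit)
  | graft s t =>
    have := instFintypeVertex s
    have := instFintypeVertex t
    inferInstanceAs (Fintype (s.Vertex ⊕ t.Vertex))

/-- The root of the tree encoded by a `GraftTree`. -/
def root : (b : GraftTree) → b.Vertex
  | point => ()
  | graft s _ => .inl s.root

/-- The tree encoded by a `GraftTree`. -/
def graph : (b : GraftTree) → SimpleGraph b.Vertex
  | point => ⊥
  | graft s t => glue s.graph t.graph s.root t.root

theorem isTree_graph (b : GraftTree) : b.graph.IsTree := by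
  induction b with
  | point => exact .of_subsingleton
  | graft s t hs ht => exact isTree_glue_iff.2 ⟨hs, ht⟩

theorem card_vertex (b : GraftTree) : Fintype.card b.Vertex = b.order := by
  induction b with
  | point => rfl
  | graft s t hs ht => rw [order, ← hs, ← ht]; exact Fintype.card_sum

theorem rootedSubtreePoly_graph_graft (s t : GraftTree) :
    rootedSubtreePoly (graft s t).graph (graft s t).root =
      rootedSubtreePoly s.graph s.root * (1 + rootedSubtreePoly t.graph t.root) :=
  rootedSubtreePoly_glue ..

theorem subtreePoly_graph_graft (s t : GraftTree) :
    subtreePoly (graft s t).graph = subtreePoly s.graph + subtreePoly t.graph +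
      rootedSubtreePoly s.graph s.root * rootedSubtreePoly t.graph t.root :=
  subtreePoly_glue ..

theorem eval_rootedSubtreePoly_graph (b : GraftTree) :
    (rootedSubtreePoly b.graph b.root).eval 1 = b.rooted := by
  induction b with
  | point => simp [rootedSubtreePoly_of_unique]
  | graft s t hs ht => simp [rootedSubtreePoly_graph_graft, hs, ht]

theorem eval_derivative_rootedSubtreePoly_graph (b : GraftTree) :
    (rootedSubtreePoly b.graph b.root).derivative.eval 1 = b.rootedTotal := by
  induction b with
  | point => simp [rootedSubtreePoly_of_unique]
  | graft s t hs ht =>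
    simp [rootedSubtreePoly_graph_graft, eval_rootedSubtreePoly_graph, hs, ht]

theorem numSubtrees_graph (b : GraftTree) : numSubtrees b.graph = b.count := by
  simp only [numSubtrees_eq_eval]
  induction b with
  | point => simp [subtreePoly_of_unique]
  | graft s t hs ht => simp [subtreePoly_graph_graft, eval_rootedSubtreePoly_graph, hs, ht]

theorem totalSubtreeOrder_graph (b : GraftTree) : totalSubtreeOrder b.graph = b.total := by
  simp only [totalSubtreeOrder_eq_eval]
  induction b with
  | point => simp [subtreePoly_of_unique]
  | graft s t hs ht =>
    simp [subtreePoly_graph_graft, eval_rootedSubtreePoly_graph,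
      eval_derivative_rootedSubtreePoly_graph, hs, ht]

theorem subtreeDensity_graph (b : GraftTree) :
    subtreeDensity b.graph = b.total / b.count / b.order := by
  rw [subtreeDensity, avgSubtreeOrder, totalSubtreeOrder_graph, numSubtrees_graph, card_vertex]

theorem exists_iso_graph {V : Type*} [Finite V] {G : SimpleGraph V} (hG : G.IsTree) (v : V) :
    ∃ (b : GraftTree) (e : G ≃g b.graph), e v = b.root := by
  induction hn : Nat.card V using Nat.strong_induction_on generalizing V with | h n ih =>
  subst hn
  rcases subsingleton_or_nontrivial V with _ | _
  · have : Unique V := ⟨⟨v⟩, fun x => Subsingleton.elim x v⟩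
    exact ⟨point, ⟨Equiv.ofUnique V point.Vertex, by simp [Subsingleton.elim _ v]⟩, rfl⟩
  obtain ⟨u, hvu⟩ := hG.connected.preconnected.exists_adj_of_nontrivial v
  obtain ⟨s, hv, hu, hcross⟩ := exists_forall_adj_iff_of_isBridge hvu
    (SimpleGraph.isAcyclic_iff_forall_adj_isBridge.1 hG.isAcyclic hvu)
  let e := isoGlueInduce s hv hu hcross
  obtain ⟨hs, hsc⟩ := isTree_glue_iff.1 (e.isTree_iff.1 hG)
  obtain ⟨b, f, hf⟩ := ih _ (Finite.card_subtype_lt hu) hs ⟨v, hv⟩ rfl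
  obtain ⟨c, g, hg⟩ := ih _ (Finite.card_subtype_lt (not_not.2 hv)) hsc ⟨u, hu⟩ rfl
  exact ⟨graft b c, e.trans (glueCongr f g hf hg),
    congrArg (glueCongr f g hf hg) (isoGlueInduce_apply s hv hu hcross) |>.trans
      (congrArg Sum.inl hf)⟩

end Graph

section LowerBound

variable {b c r : GraftTree}

theorem order_pos (b : GraftTree) : 0 < b.order := by
  cases b with
  | point => simp
  | graft s t => exact Nat.add_pos_left s.order_pos _

theorem order_le_rooted (b : GraftTree) : b.order ≤ b.rooted := by
  induction b with
  | point => rfl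
  | graft s t hs ht =>
    calc s.order + t.order ≤ s.rooted + s.rooted * t.rooted :=
          add_le_add hs (ht.trans (Nat.le_mul_of_pos_left _ (s.order_pos.trans_le hs)))
      _ = s.rooted * (1 + t.rooted) := by ring

theorem rooted_pos (b : GraftTree) : 0 < b.rooted := b.order_pos.trans_le b.order_le_rooted

theorem two_mul_rooted_le_two_pow (b : GraftTree) : 2 * b.rooted ≤ 2 ^ b.order := by
  induction b with
  | point => simp
  | graft s t _ _ =>
    calc 2 * (s.rooted * (1 + t.rooted)) = 2 * s.rooted * (1 + t.rooted) := by ring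
      _ ≤ 2 ^ s.order * 2 ^ t.order := by gcongr; have := t.rooted_pos; lia
      _ = 2 ^ (s.order + t.order) := by ring

theorem rooted_le_count (b : GraftTree) : b.rooted ≤ b.count := by
  induction b with
  | point => rfl
  | graft s t _ _ => simp only [rooted, count]; lia

theorem count_pos (b : GraftTree) : 0 < b.count := b.rooted_pos.trans_le b.rooted_le_count

theorem succ_order_mul_rooted_le (b : GraftTree) :
    (b.order + 1) * b.rooted ≤ 2 * b.rootedTotal := by
  induction b with
  | point => simp
  | graft s t _ _ =>
    calc (s.order + t.order + 1) * (s.rooted * (1 + t.rooted))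
        = (s.order + 1) * s.rooted * (1 + t.rooted) + s.rooted * t.order +
            s.rooted * (t.order * t.rooted) := by ring
      _ ≤ (s.order + 1) * s.rooted * (1 + t.rooted) + s.rooted * t.rooted +
            s.rooted * (t.order * t.rooted) := by gcongr; exact t.order_le_rooted
      _ = (s.order + 1) * s.rooted * (1 + t.rooted) +
            s.rooted * ((t.order + 1) * t.rooted) := by ring
      _ ≤ 2 * s.rootedTotal * (1 + t.rooted) + s.rooted * (2 * t.rootedTotal) := by gcongr
      _ = 2 * (s.rootedTotal * (1 + t.rooted) + s.rooted * t.rootedTotal) := by ring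

-- Equality holds for a path rooted at an end.
theorem two_mul_count_add_le (b : GraftTree) :
    2 * b.count + b.order ^ 2 ≤ 2 * b.order * b.rooted + b.order := by
  induction b with
  | point => simp
  | graft s t _ _ =>
    have hle : t.order * s.order ≤ t.order * s.rooted := by gcongr; exact s.order_le_rooted
    have hpos : t.order * t.rooted ≤ t.order * t.rooted * s.rooted :=
      Nat.le_mul_of_pos_right _ s.rooted_pos
    have hpos' : s.rooted * t.rooted ≤ s.rooted * t.rooted * s.order :=
      Nat.le_mul_of_pos_right _ s.order_pos
    simp only [order, rooted, count]
    linarith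

/-- The branches at the root. -/
@[simp]
def branches : GraftTree → List GraftTree
  | point => []
  | graft s t => t :: s.branches

theorem order_eq_add_sum (b : GraftTree) : b.order = 1 + (b.branches.map order).sum := by
  induction b with
  | point => rfl
  | graft s t hs _ => simp only [order, branches, List.map_cons, List.sum_cons, hs]; lia

theorem count_eq_add_sum (b : GraftTree) : b.count = b.rooted + (b.branches.map count).sum := by
  induction b with
  | point => rfl
  | graft s t hs _ => simp only [count, rooted, branches, List.map_cons, List.sum_cons, hs]; lia

theorem total_eq_add_sum (b : GraftTree) :
    b.total = b.rootedTotal + (b.branches.map total).sum := by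
  induction b with
  | point => rfl
  | graft s t hs _ =>
    simp only [total, rootedTotal, branches, List.map_cons, List.sum_cons, hs]
    lia

/-- `IsSplit c r b` says that deleting the branch `c` at the root of `b` leaves `r`. -/
inductive IsSplit (c : GraftTree) : GraftTree → GraftTree → Prop
  | last (r : GraftTree) : IsSplit c r (graft r c)
  | step {r s : GraftTree} (h : IsSplit c r s) (t : GraftTree) : IsSplit c (graft r t) (graft s t)

theorem exists_isSplit_of_mem_branches (hc : c ∈ b.branches) : ∃ r, IsSplit c r b := by
  induction b with
  | point => simp at hc
  | graft s t hs _ =>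
    rcases List.mem_cons.1 hc with rfl | hc
    · exact ⟨s, .last s⟩
    · obtain ⟨r, hr⟩ := hs hc
      exact ⟨r.graft t, hr.step t⟩

namespace IsSplit

theorem order_eq (h : IsSplit c r b) : b.order = (graft r c).order := by
  induction h with
  | last r => rfl
  | step h t ih => simp only [order, ih]; ring

theorem rooted_eq (h : IsSplit c r b) : b.rooted = (graft r c).rooted := by
  induction h with
  | last r => rfl
  | step h t ih => simp only [rooted, ih]; ring

theorem rootedTotal_eq (h : IsSplit c r b) : b.rootedTotal = (graft r c).rootedTotal := by
  induction h with
  | last r => rfl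
  | step h t ih => simp only [rooted, rootedTotal, ih, h.rooted_eq]; ring

theorem count_eq (h : IsSplit c r b) : b.count = (graft r c).count := by
  induction h with
  | last r => rfl
  | step h t ih => simp only [rooted, count, ih, h.rooted_eq]; ring

theorem total_eq (h : IsSplit c r b) : b.total = (graft r c).total := by
  induction h with
  | last r => rfl
  | step h t ih =>
    simp only [rooted, rootedTotal, total, ih, h.rooted_eq, h.rootedTotal_eq]; ring

theorem length_branches (h : IsSplit c r b) : b.branches.length = r.branches.length + 1 := by
  induction h with
  | last r => rfl
  | step _ t ih => simp [ih]

end IsSplit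

theorem order_lt_of_mem_branches (hc : c ∈ b.branches) : c.order < b.order := by
  obtain ⟨r, hr⟩ := exists_isSplit_of_mem_branches hc
  rw [hr.order_eq]
  exact Nat.lt_add_of_pos_left r.order_pos

theorem length_branches_lt_order (b : GraftTree) : b.branches.length < b.order := by
  induction b with
  | point => simp
  | graft s t _ _ => simp only [branches, List.length_cons, order]; have := t.order_pos; lia

/-- The root is central if no branch has more rooted subtrees than the rest of the tree, that is,
if no neighbour of the root is contained in more subtrees than the root. -/
def IsCentral (b : GraftTree) : Prop :=
  ∀ ⦃c r⦄, IsSplit c r b → c.rooted ≤ r.rooted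

-- As long as the root is not central, moving it to a neighbour contained in more subtrees
-- increases `rooted`, which is at most `count`.
theorem exists_isCentral (b : GraftTree) : ∃ d : GraftTree,
    d.order = b.order ∧ d.count = b.count ∧ d.total = b.total ∧ d.IsCentral := by
  induction hn : b.count - b.rooted using Nat.strong_induction_on generalizing b with | h n ih =>
  subst hn
  by_cases hb : b.IsCentral
  · exact ⟨b, rfl, rfl, rfl, hb⟩
  simp only [IsCentral, not_forall, not_le] at hb
  obtain ⟨c, r, hsplit, hlt⟩ := hb
  have hrooted : b.rooted < (graft c r).rooted := by
    rw [hsplit.rooted_eq]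
    simp only [rooted]
    linarith
  have horder : (graft c r).order = b.order := by rw [hsplit.order_eq]; simp only [order]; ring
  have hcount : (graft c r).count = b.count := by rw [hsplit.count_eq]; simp only [count]; ring
  have htotal : (graft c r).total = b.total := by rw [hsplit.total_eq]; simp only [total]; ring
  have hle := (graft c r).rooted_le_count
  rw [← horder, ← hcount, ← htotal]
  exact ih _ (by lia) _ rfl

theorem two_mul_order_le_rooted_add_two (b : GraftTree) (hb : 2 ≤ b.branches.length) :
    2 * b.order ≤ b.rooted + 2 := by
  match b, hb with
  | graft (graft point c) d, _ =>
    have hc := c.order_pos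
    have hd := d.order_pos
    have hcr := c.order_le_rooted
    have hdr := d.order_le_rooted
    simp only [order, rooted]
    nlinarith
  | graft (graft (graft s c) d) e, _ =>
    have ih := two_mul_order_le_rooted_add_two (graft (graft s c) d) (by simp)
    have he := e.order_le_rooted
    have hge := (graft (graft s c) d).length_branches_lt_order.trans_le
      (graft (graft s c) d).order_le_rooted
    have hmul : 2 * e.rooted ≤ (graft (graft s c) d).rooted * e.rooted := by
      gcongr
      exact Nat.succ_le_of_lt (lt_of_le_of_lt (Nat.succ_pos _) hge)
    rw [order, rooted]
    linarith

theorem two_mul_order_mul_count_le (hr : 2 ≤ r.branches.length) (hc : c.rooted ≤ r.rooted) :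
    2 * r.order * c.count ≤ c.order * (r.rooted * (1 + c.rooted)) := by
  have hkey : 2 * r.order * c.rooted + r.order ≤
      r.order * c.order + r.rooted * (1 + c.rooted) :=
    two_mul_mul_add_le (hr.trans r.length_branches_lt_order.le)
      (r.two_mul_order_le_rooted_add_two hr) c.order_pos c.order_le_rooted
      c.two_mul_rooted_le_two_pow hc
  have hcount := Nat.mul_le_mul_left r.order c.two_mul_count_add_le
  have hkey' := Nat.mul_le_mul_left c.order hkey
  linarith

theorem two_branch_bound {c d : GraftTree} (hc : c.rooted ≤ d.rooted + 1)
    (hd : d.rooted ≤ c.rooted + 1) :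
    2 * (1 + c.order + d.order) * (c.count + d.count) ≤
      (c.order + d.order + 4) * ((1 + c.rooted) * (1 + d.rooted)) +
        2 * (c.order * c.count + d.order * d.count) := by
  have hcr := c.order_le_rooted
  have hdr := d.order_le_rooted
  have hcc := c.two_mul_count_add_le
  have hdc := d.two_mul_count_add_le
  rify at *
  have key := two_branch_inequality (X := c.order + 1) (Y := d.order + 1) (A := c.rooted + 1)
    (B := d.rooted + 1) (by simp) (by simp) (by linarith) (by linarith) (by linarith)
    (by linarith)
  have hcc' := mul_le_mul_of_nonneg_left hcc (by positivity : (0 : ℝ) ≤ d.order + 1)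
  have hdc' := mul_le_mul_of_nonneg_left hdc (by positivity : (0 : ℝ) ≤ c.order + 1)
  linarith

namespace IsCentral

theorem branch_bound_of_two_lt_length (hb : b.IsCentral) (hlen : 2 < b.branches.length) :
    2 * b.order * (b.branches.map count).sum ≤
      b.order * b.rooted + 2 * (b.branches.map fun c => c.order * c.count).sum := by
  have hterm : ∀ c ∈ b.branches,
      2 * b.order * c.count ≤ c.order * b.rooted + 2 * (c.order * c.count) := by
    intro c hc
    obtain ⟨r, hsplit⟩ := exists_isSplit_of_mem_branches hc
    have hle := two_mul_order_mul_count_le (by have := hsplit.length_branches; lia) (hb hsplit)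
    rw [hsplit.order_eq, hsplit.rooted_eq, order, rooted]
    linarith
  have hsum := List.sum_le_sum hterm
  simp only [List.sum_map_mul_left, List.sum_map_add, List.sum_map_mul_right] at hsum
  refine hsum.trans ?_
  gcongr
  exact b.order_eq_add_sum ▸ Nat.le_add_left _ _

theorem branch_bound (hb : b.IsCentral) :
    2 * b.order * (b.branches.map count).sum ≤
      (b.order + 3) * b.rooted + 2 * (b.branches.map fun c => c.order * c.count).sum := by
  match b, hb with
  | point, _ => simp
  | graft point c, hb =>
    have hrooted : c.rooted ≤ 1 := hb (.last _)
    have hcount := c.two_mul_count_add_le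
    have hpos := c.order_pos
    have hle := c.order_le_rooted
    obtain ⟨horder, hrooted⟩ : c.order = 1 ∧ c.rooted = 1 := by lia
    rw [horder, hrooted] at hcount
    simp only [branches, order, rooted, List.map_cons, List.map_nil, List.sum_cons, List.sum_nil,
      horder, hrooted]
    lia
  | graft (graft point c) d, hb =>
    have hd : d.rooted ≤ c.rooted + 1 := by simpa [add_comm] using hb (.last _)
    have hc : c.rooted ≤ d.rooted + 1 := by simpa [add_comm] using hb ((IsSplit.last _).step d)
    have hbound := two_branch_bound hc hd
    simp only [branches, order, rooted, List.map_cons, List.map_nil, List.sum_cons, List.sum_nil]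
    linarith
  | graft (graft (graft s c) d) e, hb =>
    refine (hb.branch_bound_of_two_lt_length (by simp)).trans ?_
    gcongr
    lia

end IsCentral

theorem order_mul_count_le (b : GraftTree) : b.order * b.count ≤ 3 * b.total := by
  induction hn : b.order using Nat.strong_induction_on generalizing b with | h n ih =>
  obtain ⟨d, horder, hcount, htotal, hd⟩ := b.exists_isCentral
  have hsum : (d.branches.map fun c => c.order * c.count).sum ≤ 3 * (d.branches.map total).sum := by
    rw [← List.sum_map_mul_left]
    exact List.sum_le_sum fun c hc =>
      ih _ (by have := order_lt_of_mem_branches hc; lia) c rfl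
  have hbound := hd.branch_bound
  have hrooted := d.succ_order_mul_rooted_le
  rw [← hn, ← hcount, ← htotal, ← horder, d.count_eq_add_sum, d.total_eq_add_sum]
  linarith

end LowerBound

end GraftTree

theorem one_third_le_subtreeDensity {V : Type*} [Fintype V] {G : SimpleGraph V} (hG : G.IsTree) :
    1 / 3 ≤ subtreeDensity G := by
  obtain ⟨v⟩ := hG.connected.nonempty
  obtain ⟨b, e, -⟩ := GraftTree.exists_iso_graph hG v
  have hbound : (b.order * b.count : ℝ) ≤ 3 * b.total := by exact_mod_cast b.order_mul_count_le
  have horder : (0 : ℝ) < b.order := by exact_mod_cast b.order_pos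
  have hcount : (0 : ℝ) < b.count := by exact_mod_cast b.count_pos
  rw [subtreeDensity_congr e, b.subtreeDensity_graph, div_div, le_div_iff₀ (by positivity)]
  linarith

namespace GraftTree

section Dumbbell

open Filter Topology

/-- The star with `k` leaves, rooted at its centre. -/
def star : ℕ → GraftTree
  | 0 => point
  | k + 1 => graft (star k) point

/-- The tree obtained by attaching a path with `L` vertices to the root of `b`; the new root is the
other end of the path. -/
def extend (b : GraftTree) : ℕ → GraftTree
  | 0 => b
  | L + 1 => graft point (extend b L)

/-- Two stars with `k` leaves each, their centres joined by a path with `L` inner vertices. -/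
def dumbbell (k L : ℕ) : GraftTree := graft ((star k).extend L) (star k)

theorem order_star (k : ℕ) : (star k).order = k + 1 := by
  induction k with
  | zero => rfl
  | succ k ih => simp [star, ih]

theorem rooted_star (k : ℕ) : (star k).rooted = 2 ^ k := by
  induction k with
  | zero => rfl
  | succ k ih => simp [star, ih, pow_succ]

theorem rootedTotal_star (k : ℕ) : ((star k).rootedTotal : ℝ) = (k + 2) * 2 ^ k / 2 := by
  induction k with
  | zero => simp [star]
  | succ k ih => push_cast [star, rootedTotal, rooted, ih, rooted_star]; ring

theorem count_star (k : ℕ) : (star k).count = 2 ^ k + k := by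
  induction k with
  | zero => rfl
  | succ k ih => simp only [star, count, rooted, ih, rooted_star]; ring

theorem total_star (k : ℕ) : ((star k).total : ℝ) = (k + 2) * 2 ^ k / 2 + k := by
  induction k with
  | zero => simp [star]
  | succ k ih =>
    push_cast [star, total, rooted, rootedTotal, ih, rooted_star, rootedTotal_star]
    ring

theorem order_extend (b : GraftTree) (L : ℕ) : (b.extend L).order = b.order + L := by
  induction L with
  | zero => rfl
  | succ L ih => simp only [extend, order, ih]; ring

theorem rooted_extend (b : GraftTree) (L : ℕ) : (b.extend L).rooted = b.rooted + L := by
  induction L with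
  | zero => rfl
  | succ L ih => simp only [extend, rooted, ih]; ring

theorem rootedTotal_extend (b : GraftTree) (L : ℕ) :
    ((b.extend L).rootedTotal : ℝ) = b.rootedTotal + L * (1 + b.rooted) + L * (L - 1) / 2 := by
  induction L with
  | zero => simp [extend]
  | succ L ih => push_cast [extend, rooted, rootedTotal, ih, rooted_extend]; ring

theorem count_extend (b : GraftTree) (L : ℕ) :
    ((b.extend L).count : ℝ) = b.count + L * b.rooted + L * (L + 1) / 2 := by
  induction L with
  | zero => simp [extend]
  | succ L ih => push_cast [extend, rooted, count, ih, rooted_extend]; ring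

theorem total_extend (b : GraftTree) (L : ℕ) :
    ((b.extend L).total : ℝ) = b.total + L * b.rootedTotal + (1 + b.rooted) * (L * (L + 1) / 2) +
      (L + 1) * L * (L - 1) / 6 := by
  induction L with
  | zero => simp [extend]
  | succ L ih =>
    push_cast [extend, rooted, rootedTotal, total, ih, rooted_extend, rootedTotal_extend]
    ring

variable {L : ℕ → ℕ} {τ : ℝ}

theorem tendsto_dumbbell_parameters
    (hL : Tendsto (fun k => (L k : ℝ) / 2 ^ k) atTop (𝓝 τ)) :
    Tendsto (fun k : ℕ => ((L k : ℝ) / 2 ^ k, (k : ℝ) / 2 ^ k, (1 : ℝ) / 2 ^ k)) atTop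
      (𝓝 (τ, 0, 0)) := by
  have hleaves : Tendsto (fun k : ℕ => (k : ℝ) / 2 ^ k) atTop (𝓝 0) := by
    simpa using tendsto_pow_const_div_const_pow_of_one_lt 1 (one_lt_two (α := ℝ))
  have hone : Tendsto (fun k : ℕ => (1 : ℝ) / 2 ^ k) atTop (𝓝 0) :=
    (tendsto_pow_atTop_atTop_of_one_lt one_lt_two).const_div_atTop 1
  exact hL.prodMk_nhds (hleaves.prodMk_nhds hone)

theorem tendsto_order_dumbbell (hL : Tendsto (fun k => (L k : ℝ) / 2 ^ k) atTop (𝓝 τ)) :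
    Tendsto (fun k => ((dumbbell k (L k)).order : ℝ) / 2 ^ k) atTop (𝓝 τ) := by
  have hcont : Continuous fun (t, κ, ε) => (t + 2 * κ + 2 * ε : ℝ) := by fun_prop
  refine ((hcont.tendsto' _ τ (by simp)).comp (tendsto_dumbbell_parameters hL)).congr fun k => ?_
  push_cast [Function.comp_apply, dumbbell, order, order_extend, order_star]
  ring

theorem tendsto_count_dumbbell (hL : Tendsto (fun k => (L k : ℝ) / 2 ^ k) atTop (𝓝 τ)) :
    Tendsto (fun k => ((dumbbell k (L k)).count : ℝ) / (2 ^ k) ^ 2) atTop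
      (𝓝 (1 + 2 * τ + τ ^ 2 / 2)) := by
  have hcont : Continuous fun (t, κ, ε) =>
      (1 + 2 * t + 2 * ε + 2 * κ * ε + t * (t + ε) / 2 : ℝ) := by fun_prop
  refine ((hcont.tendsto' _ _ (by ring)).comp (tendsto_dumbbell_parameters hL)).congr fun k => ?_
  push_cast [Function.comp_apply, dumbbell, count, count_extend, count_star, rooted_extend,
    rooted_star]
  field_simp
  ring

theorem tendsto_total_dumbbell (hL : Tendsto (fun k => (L k : ℝ) / 2 ^ k) atTop (𝓝 τ)) :
    Tendsto (fun k => ((dumbbell k (L k)).total : ℝ) / (2 ^ k) ^ 3) atTop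
      (𝓝 (τ * (1 + τ + τ ^ 2 / 6))) := by
  have hcont : Continuous fun (t, κ, ε) =>
      ((κ + 2 * ε) * ε + 2 * κ * ε ^ 2 + t * (κ + 2 * ε) / 2 + (ε + 1) * t * (t + ε) / 2 +
        (t + ε) * t * (t - ε) / 6 + t * (ε + 1) + t * (t - ε) / 2 +
        (2 + t) * (κ + 2 * ε) / 2 : ℝ) := by fun_prop
  refine ((hcont.tendsto' _ _ (by ring)).comp (tendsto_dumbbell_parameters hL)).congr fun k => ?_
  push_cast [Function.comp_apply, dumbbell, total, total_extend, total_star, rootedTotal_extend,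
    rootedTotal_star, rooted_extend, rooted_star]
  field_simp
  ring

theorem tendsto_subtreeDensity_dumbbell (hτ : 0 < τ)
    (hL : Tendsto (fun k => (L k : ℝ) / 2 ^ k) atTop (𝓝 τ)) :
    Tendsto (fun k => subtreeDensity (dumbbell k (L k)).graph) atTop
      (𝓝 ((1 + τ + τ ^ 2 / 6) / (1 + 2 * τ + τ ^ 2 / 2))) := by
  have hlim := ((tendsto_total_dumbbell hL).div (tendsto_count_dumbbell hL) (by positivity)).div
    (tendsto_order_dumbbell hL) hτ.ne'
  convert hlim using 2 with k
  · simp only [subtreeDensity_graph, Pi.div_apply]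
    field_simp
  · field_simp

end Dumbbell

theorem Ioo_subset_closure_range_subtreeDensity :
    Set.Ioo (1 / 3 : ℝ) 1 ⊆ closure (Set.range fun b : GraftTree => subtreeDensity b.graph) := by
  rintro x ⟨hx, hx'⟩
  obtain ⟨τ, hτ, hroot⟩ := exists_pos_quadratic_eq_zero (a := x / 2 - 1 / 6) (b := 2 * x - 1)
    (c := x - 1) (by linarith) (by linarith)
  have hlimit : (1 + τ + τ ^ 2 / 6) / (1 + 2 * τ + τ ^ 2 / 2) = x := by
    rw [div_eq_iff (by positivity)]
    linear_combination -hroot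
  have hfloor := (tendsto_nat_floor_mul_div_atTop hτ.le).comp
    (tendsto_pow_atTop_atTop_of_one_lt (one_lt_two (α := ℝ)))
  exact mem_closure_of_tendsto (hlimit ▸ tendsto_subtreeDensity_dumbbell hτ hfloor)
    (.of_forall fun k => Set.mem_range_self _)

end GraftTree

theorem exists_fin_subtreeDensity_eq {V : Type*} [Fintype V] {G : SimpleGraph V} (hG : G.IsTree) :
    ∃ (n : ℕ) (H : SimpleGraph (Fin n)), H.IsTree ∧ subtreeDensity G = subtreeDensity H :=
  ⟨_, G.overFin rfl, (G.overFinIso rfl).isTree_iff.1 hG, subtreeDensity_congr (G.overFinIso rfl)⟩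

theorem stmt10 :
    (∀ (n : ℕ) (G : SimpleGraph (Fin n)), G.IsTree →
      subtreeDensity G ∈ Set.Icc (1 / 3 : ℝ) 1) ∧
    closure {x : ℝ | ∃ (n : ℕ) (G : SimpleGraph (Fin n)), G.IsTree ∧
      x = subtreeDensity G} = Set.Icc (1 / 3 : ℝ) 1 := by
  have hbound (n : ℕ) (G : SimpleGraph (Fin n)) (hG : G.IsTree) :
      subtreeDensity G ∈ Set.Icc (1 / 3 : ℝ) 1 :=
    ⟨one_third_le_subtreeDensity hG, subtreeDensity_le_one G⟩
  refine ⟨hbound, Set.Subset.antisymm (closure_minimal ?_ isClosed_Icc) ?_⟩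
  · rintro _ ⟨n, G, hG, rfl⟩
    exact hbound n G hG
  · rw [← closure_Ioo (by norm_num)]
    refine closure_minimal ?_ isClosed_closure
    refine GraftTree.Ioo_subset_closure_range_subtreeDensity.trans (closure_mono ?_)
    rintro _ ⟨b, rfl⟩
    exact exists_fin_subtreeDensity_eq b.isTree_graph
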